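/- Let R be a commutative ring, let A be a unital R-algebra, let H and G be groups, and let φ : H → G be an injective group homomorphism. For g ∈ G let β^G_g denote the R-algebra automorphism of the PiTensorProduct algebra ⨂[R] (x : G), A given by reindexing along x ↦ g x, and define β^H_h on ⨂[R] (x : H), A analogously. Then there exists an R-algebra homomorphism Ψ : (⨂[R] (x : H), A) → (⨂[R] (x : G), A) such that on pure tensors Ψ(⊗_{x∈H} z_x) = ⊗_{y∈G} w_y, where w_{φ(x)} = z_x for x ∈ H and w_y = 1 for y outside the range of φ, and such that Ψ ∘ β^H_h = β^G_{φ(h)} ∘ Ψ for every h ∈ H. -/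

import Mathlib

open scoped TensorProduct

theorem extend_update_aux {H G A : Type*} [DecidableEq H] [DecidableEq G] (f : H → G)
    (hf : Function.Injective f) (z : H → A) (e : G → A) (i : H) (a : A) :
    Function.extend f (Function.update z i a) e =
      Function.update (Function.extend f z e) (f i) a := by
  funext y
  by_cases hy : ∃ x, f x = y
  · obtain ⟨x, rfl⟩ := hy
    rw [hf.extend_apply]
    by_cases hx : x = i
    · subst hx; simp
    · rw [Function.update_of_ne hx, Function.update_of_ne (fun h => hx (hf h)), hf.extend_apply]
  · have hne : y ≠ f i := fun h => hy ⟨i, h.symm⟩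
    rw [Function.update_of_ne hne, Function.extend_apply' _ _ _ hy, Function.extend_apply' _ _ _ hy]

/-- The extension-by-one multilinear map. -/
noncomputable def extendMultilinear (R : Type*) [CommRing R]
    (A : Type*) [Ring A] [Algebra R A] {H G : Type*} (f : H → G)
    (hf : Function.Injective f) :
    MultilinearMap R (fun _ : H => A) (⨂[R] (_ : G), A) where
  toFun z := PiTensorProduct.tprod R (Function.extend f z fun _ => (1 : A))
  map_update_add' z i a b := by
    classical
    simp only [extend_update_aux f hf]
    exact MultilinearMap.map_update_add _ _ _ _ _
  map_update_smul' z i c a := by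
    classical
    simp only [extend_update_aux f hf]
    exact MultilinearMap.map_update_smul _ _ _ _ _

/-- For an injective group homomorphism `φ : H → G` and a unital `R`-algebra `A`, there is an
`R`-algebra homomorphism `Ψ : ⨂[R] (x : H), A → ⨂[R] (x : G), A` which on pure tensors places
`z_x` in the `φ x`-th factor and `1` in the factors outside the range of `φ`, and which
intertwines the Bernoulli shifts: `Ψ ∘ β^H_h = β^G_{φ h} ∘ Ψ` for every `h : H`. -/
theorem exists_equivariant_tensor_extension {R : Type*} [CommRing R]
    {A : Type*} [Ring A] [Algebra R A] {H G : Type*} [Group H] [Group G]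
    (φ : H →* G) (hφ : Function.Injective φ) :
    ∃ Ψ : (⨂[R] (_ : H), A) →ₐ[R] (⨂[R] (_ : G), A),
      (∀ z : H → A,
        Ψ (PiTensorProduct.tprod R z) =
          PiTensorProduct.tprod R (Function.extend φ z fun _ => (1 : A))) ∧
      (∀ (h : H) (x : ⨂[R] (_ : H), A),
        Ψ ((PiTensorProduct.reindex R (fun _ : H => A) (Equiv.mulLeft h)) x) =
          (PiTensorProduct.reindex R (fun _ : G => A) (Equiv.mulLeft (φ h))) (Ψ x)) := by
  have key : ∀ z : H → A, PiTensorProduct.liftAlgHom (extendMultilinear R A φ hφ)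
      (by
        change PiTensorProduct.tprod R _ = PiTensorProduct.tprod R 1
        congr 1
        funext y
        by_cases hy : ∃ x, φ x = y
        · obtain ⟨x, rfl⟩ := hy
          rw [hφ.extend_apply]; rfl
        · rw [Function.extend_apply' _ _ _ hy]; rfl)
      (by
        intro z w
        change PiTensorProduct.tprod R _ = PiTensorProduct.tprod R _ * PiTensorProduct.tprod R _
        rw [PiTensorProduct.tprod_mul_tprod]
        congr 1
        funext y
        by_cases hy : ∃ x, φ x = y
        · obtain ⟨x, rfl⟩ := hy
          simp only [Pi.mul_apply, hφ.extend_apply]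
        · simp only [Pi.mul_apply, Function.extend_apply' _ _ _ hy, mul_one])
      (PiTensorProduct.tprod R z) =
        PiTensorProduct.tprod R (Function.extend φ z fun _ => (1 : A)) := by
    intro z
    exact PiTensorProduct.lift.tprod z
  obtain ⟨Ψ, key⟩ : ∃ Ψ : (⨂[R] (_ : H), A) →ₐ[R] (⨂[R] (_ : G), A), ∀ z : H → A,
      Ψ (PiTensorProduct.tprod R z) =
        PiTensorProduct.tprod R (Function.extend φ z fun _ => (1 : A)) := ⟨_, key⟩
  refine ⟨Ψ, key, ?_⟩
  intro h x
  induction x using PiTensorProduct.induction_on with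
  | smul_tprod r z =>
    simp only [map_smul]
    congr 1
    have h1 := PiTensorProduct.reindex_tprod (R := R) (s := fun _ : H => A) (Equiv.mulLeft h) z
    have h2 := PiTensorProduct.reindex_tprod (R := R) (s := fun _ : G => A) (Equiv.mulLeft (φ h))
      (Function.extend φ z fun _ => (1 : A))
    refine (congrArg Ψ h1).trans ((key _).trans ?_)
    rw [key]
    refine Eq.trans ?_ h2.symm
    refine congrArg (PiTensorProduct.tprod R) ?_
    funext y
    by_cases hy : ∃ x, φ x = y
    · obtain ⟨x, rfl⟩ := hy
      have e : (Equiv.mulLeft (φ h)).symm (φ x) = φ (h⁻¹ * x) := by simp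
      rw [e, hφ.extend_apply, hφ.extend_apply]
      simp
    · have hy' : ¬ ∃ x, φ x = (Equiv.mulLeft (φ h)).symm y := by
        rintro ⟨x, hx⟩
        exact hy ⟨h * x, by rw [map_mul, hx]; simp⟩
      rw [Function.extend_apply' _ _ _ hy, Function.extend_apply' _ _ _ hy']
  | add a b ha hb => simp only [map_add, ha, hb]
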